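/- Assume θ_+ = 1 and condition (★), and fix ℓ ∈ R^d \ {0}. Let O = (A_+(ℓ) ∪ A_-(ℓ))^c, and for m ∈ Z let O_m be the event that X_n·ℓ ≤ m for infinitely many n and X_n·ℓ ≥ m for infinitely many n. Then P(O) = P(∩_{m∈Z} O_m). -/

import Mathlib

/-!
Write the *height* of a site `x` for `x · l`, and call a step `v` admissible if `∫ γ(v) dμ > 0`. The
event `⋂ O_m` is trivially contained in `O`. For the converse it suffices, by the symmetry
`l ↦ -l`, to show that almost surely a walk whose height does not tend to `+∞` has heights with
liminf `-∞` (`IsRWRE.ae_frequently_low`). Otherwise the walk eventually stays above a height `b`,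
yet is infinitely often below some height `M`, so it visits the strip `[b, M]` infinitely often.

* Infinitely many distinct sites of the strip are visited. If not, some `x` is visited infinitely
  often, hence so is every site of `C_x` (`IsRWRE.ae_frequently_step`), and `C_x` is an infinite
  class of mutually connected sites. The part of `C_x` below `x` is contained in the strip and
  visited, hence finite, so `C_x` has a lowest site (ties being broken lexicographically). By mass
  transport, almost surely no infinite class has one (`ae_finite_of_isLowest`).

* If some admissible step `v` has negative height, then the walk enters infinitely many half-lines
  `{x + j v} ∩ {height ≤ M}`, and at each first entrance the ray in direction `v` is unexplored
  (`frequently_fresh`). By independence the walk then follows the ray for `K` steps with conditional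
  probability bounded below, so it does so infinitely often (`IsRWRE.ae_frequently_run`) and,
  for `K` large, goes below `b`: a contradiction.

* If no admissible step has negative height, then the height is monotone, hence bounded by `M`. By
  (★) some admissible step has positive height, and the previous argument applied to `-l` makes the
  walk exceed `M`.

The two statements on infinitely many times are conditional Borel–Cantelli arguments, reduced by Lévy's
0-1 law to a lower bound on cylinder events (`levy_io`, `levy_walk`).
-/

open MeasureTheory Filter Set Topology
open scoped Classical ENNReal

noncomputable section

/-- Lattice sites of `ℤ^d`. -/
abbrev Site (d : ℕ) := Fin d → ℤ

/-- The `2d` unit vectors `±e_i` of `ℤ^d`, indexed by `Fin d × Bool`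
(`true` for `+e_i`, `false` for `-e_i`). -/
def stepVec (d : ℕ) (i : Fin d × Bool) : Site d :=
  if i.2 = true then Pi.single i.1 1 else -Pi.single i.1 1

/-- An element of `𝒫`: a probability measure on the set `E` of unit vectors of `ℤ^d`,
recorded via its probability mass function on lattice vectors. -/
structure EnvDist (d : ℕ) where
  prob : Site d → ℝ
  nonneg : ∀ v, 0 ≤ prob v
  support : ∀ v, prob v ≠ 0 → ∃ i, v = stepVec d i
  total : ∑ i : Fin d × Bool, prob (stepVec d i) = 1

instance {d : ℕ} : MeasurableSpace (EnvDist d) :=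
  MeasurableSpace.comap EnvDist.prob inferInstance

/-- Environments: an element of `𝒫` at every site. -/
abbrev EnvOmega (d : ℕ) := Site d → EnvDist d

/-- Path space for the walk. -/
abbrev PathSpace (d : ℕ) := ℕ → Site d

/-- Sample space for the annealed walk: environment together with path. -/
abbrev RWSpace (d : ℕ) := EnvOmega d × PathSpace d

/-- Dot product of a lattice vector with a real vector. -/
def dotR {d : ℕ} (x : Site d) (l : Fin d → ℝ) : ℝ := ∑ i, (x i : ℝ) * l i

/-- Dot product of two lattice vectors. -/
def dotZ {d : ℕ} (x y : Site d) : ℤ := ∑ i, x i * y i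

/-- Quenched probability that the walk follows the steps of `x` for its first `n` steps. -/
def pathWeight {d : ℕ} (ω : EnvOmega d) (n : ℕ) (x : ℕ → Site d) : ℝ :=
  ∏ k ∈ Finset.range n, (ω (x k)).prob (x (k + 1) - x k)

/-- `ν` is the product measure `μ^{⊗ℤ^d}`, i.e. the coordinates are i.i.d. with law `μ`. -/
def IsIIDEnv {d : ℕ} (μ : Measure (EnvDist d)) (ν : Measure (EnvOmega d)) : Prop :=
  IsProbabilityMeasure μ ∧ IsProbabilityMeasure ν ∧
    ∀ (s : Finset (Site d)) (A : Site d → Set (EnvDist d)),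
      (∀ x ∈ s, MeasurableSet (A x)) →
      ν {ω | ∀ x ∈ s, ω x ∈ A x} = ∏ x ∈ s, μ (A x)

/-- `P` is the annealed law of the RWRE started at the origin in an i.i.d. environment
with marginal `μ`: the environment marginal is the i.i.d. product, and the cylinder
probabilities are given by averaging the quenched Markov-chain probabilities. -/
def IsRWRE {d : ℕ} (μ : Measure (EnvDist d)) (P : Measure (RWSpace d)) : Prop :=
  IsProbabilityMeasure P ∧ IsIIDEnv μ (P.map Prod.fst) ∧
    ∀ (n : ℕ) (x : ℕ → Site d) (A : Set (EnvOmega d)), MeasurableSet A →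
      (P {q | q.1 ∈ A ∧ ∀ k ≤ n, q.2 k = x k}).toReal =
        (if x 0 = 0 then (1 : ℝ) else 0) * ∫ ω in A, pathWeight ω n x ∂(P.map Prod.fst)

/-- `Q` is the quenched law `ℙ_ω` of the walk in the fixed environment `ω`, started at the
origin. -/
def IsQuenchedRW {d : ℕ} (ω : EnvOmega d) (Q : Measure (PathSpace d)) : Prop :=
  IsProbabilityMeasure Q ∧
    ∀ (n : ℕ) (x : ℕ → Site d),
      (Q {w | ∀ k ≤ n, w k = x k}).toReal =
        (if x 0 = 0 then (1 : ℝ) else 0) * pathWeight ω n x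

/-- `x → y`: there is a directed path from `x` to `y` in the graph `G(ω)`. -/
def Reaches {d : ℕ} (ω : EnvOmega d) : Site d → Site d → Prop :=
  Relation.ReflTransGen (fun a b => 0 < (ω a).prob (b - a))

/-- The forward cluster `C_x`. -/
def clusterC {d : ℕ} (ω : EnvOmega d) (x : Site d) : Set (Site d) := {y | Reaches ω x y}

/-- The mutually connected cluster `M_x = C_x ∩ B_x`. -/
def clusterM {d : ℕ} (ω : EnvOmega d) (x : Site d) : Set (Site d) :=
  {y | Reaches ω x y ∧ Reaches ω y x}

/-- The local drift `u = ∑_e γ(e) e` of an environment value `γ`. -/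
def drift {d : ℕ} (γ : EnvDist d) : Fin d → ℝ :=
  fun i => ∑ k : Fin d × Bool, γ.prob (stepVec d k) * ((stepVec d k i : ℤ) : ℝ)

/-- `N_n`: the number of times before time `n` at which the walk sits on a site whose
environment equals `γ`. -/
def envCount {d : ℕ} (γ : EnvDist d) (q : RWSpace d) (n : ℕ) : ℕ :=
  Set.ncard {m : ℕ | m < n ∧ q.1 (q.2 m) = γ}

end


/-! ### A conditional Borel–Cantelli principle -/

/-- If at each time `n` the event `N n` of the past forces `S n` to have conditional probability
at least `c > 0`, then almost surely infinitely many `N n` entail infinitely many `S n`. By Lévy's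
0-1 law the conditional probability of `⋃ n ≥ n₀, S n` tends to its indicator, while it is at
least `c` on each `N n`; no independence or spacing of the times is needed. -/
theorem levy_io {Ω : Type*} {m0 : MeasurableSpace Ω} {P : Measure Ω} [IsProbabilityMeasure P]
    (F : Filtration ℕ m0) (N S : ℕ → Set Ω) {c : ℝ} (hc : 0 < c) (K : ℕ)
    (hN : ∀ n, MeasurableSet[F n] (N n)) (hS : ∀ n, MeasurableSet[F (n + K)] (S n))
    (h : ∀ n G, MeasurableSet[F n] G → G ⊆ N n → c * P.real G ≤ P.real (G ∩ S n)) :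
    ∀ᵐ q ∂P, (∃ᶠ n in atTop, q ∈ N n) → ∃ᶠ n in atTop, q ∈ S n := by
  have key : ∀ n0 : ℕ, ∀ᵐ q ∂P, (∃ᶠ n in atTop, q ∈ N n) → ∃ n, n0 ≤ n ∧ q ∈ S n := by
    intro n0
    set D : Set Ω := ⋃ n, ⋃ (_ : n0 ≤ n), S n with hD
    set f : Ω → ℝ := D.indicator (fun _ => 1) with hf
    have hSD : ∀ n, n0 ≤ n → S n ⊆ D := fun n hn q hq => by
      simp only [hD, mem_iUnion]; exact ⟨n, hn, hq⟩
    have hle : (⨆ n, F n) ≤ m0 := iSup_le fun n => F.le n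
    have hDm : MeasurableSet[⨆ n, F n] D := by
      refine MeasurableSet.iUnion fun n => MeasurableSet.iUnion fun _ => ?_
      exact (le_iSup (fun n => F n) (n + K)) _ (hS n)
    have hDm0 : MeasurableSet D := hle _ hDm
    have hfi : Integrable f P := (integrable_const (1 : ℝ)).indicator hDm0
    have hfm : StronglyMeasurable[⨆ n, F n] f := stronglyMeasurable_const.indicator hDm
    have h1 := tendsto_ae_condExp (μ := P) (ℱ := F) f
    rw [condExp_of_stronglyMeasurable hle hfm hfi] at h1
    have h2 : ∀ n, n0 ≤ n → ∀ᵐ q ∂P, q ∈ N n → c ≤ (P[f|F n]) q := by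
      intro n hn
      set Z := P[f|F n] with hZ
      have hZm : Measurable[F n] Z := stronglyMeasurable_condExp.measurable
      set G : Set Ω := N n ∩ {q | Z q < c} with hG
      have hGm : MeasurableSet[F n] G :=
        (hN n).inter (hZm measurableSet_Iio)
      have hGm0 : MeasurableSet G := F.le n _ hGm
      have e1 : ∫ q in G, Z q ∂P = P.real (G ∩ D) := by
        rw [hZ, setIntegral_condExp (F.le n) hfi hGm, hf, setIntegral_indicator hDm0]
        simp
      have e2 : c * P.real G ≤ ∫ q in G, Z q ∂P := by
        rw [e1]
        refine (h n G hGm inter_subset_left).trans (measureReal_mono ?_)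
        exact inter_subset_inter_right _ (hSD n hn)
      have hZi : Integrable Z P := integrable_condExp
      have e3 : ∫ q in G, (c - Z q) ∂P ≤ 0 := by
        rw [integral_sub (integrable_const c) hZi.integrableOn]
        simp only [integral_const, smul_eq_mul, MeasurableSet.univ, measureReal_restrict_apply,
          univ_inter]
        linarith
      have e4 : P G = 0 := by
        by_contra hne
        have hpos : 0 < ∫ q in G, (c - Z q) ∂P := by
          rw [setIntegral_pos_iff_support_of_nonneg_ae]
          · refine lt_of_lt_of_le (pos_iff_ne_zero.2 hne) (measure_mono fun q hq => ⟨?_, hq⟩)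
            have : Z q < c := hq.2
            simp only [Function.mem_support]; linarith
          · refine (ae_restrict_iff' hGm0).2 (ae_of_all _ fun q hq => ?_)
            have : Z q < c := hq.2
            simp only [Pi.zero_apply]; linarith
          · exact ((integrable_const c).sub hZi).integrableOn
        linarith
      have : ∀ᵐ q ∂P, q ∉ G := measure_eq_zero_iff_ae_notMem.1 e4
      filter_upwards [this] with q hq hqN
      by_contra hlt
      exact hq ⟨hqN, not_le.1 hlt⟩
    have h2' : ∀ᵐ q ∂P, ∀ n, n0 ≤ n → q ∈ N n → c ≤ (P[f|F n]) q := by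
      rw [ae_all_iff]; intro n
      by_cases hn : n0 ≤ n
      · filter_upwards [h2 n hn] with q hq _ using hq
      · exact ae_of_all _ fun q hn' => absurd hn' hn
    filter_upwards [h1, h2'] with q hq1 hq2 hio
    have hfq : c ≤ f q := by
      by_contra hlt
      have hev := hq1.eventually (gt_mem_nhds (not_le.1 hlt))
      obtain ⟨n, hn1, hn2, hn3⟩ := (hio.and_eventually (hev.and (eventually_ge_atTop n0))).exists
      exact absurd (hq2 n hn3 hn1) (not_le.2 hn2)
    have hqD : q ∈ D := by
      by_contra hqD
      rw [hf, indicator_of_notMem hqD] at hfq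
      linarith
    simpa only [hD, mem_iUnion, exists_prop] using hqD
  filter_upwards [ae_all_iff.2 key] with q hq hio
  exact frequently_atTop.2 fun n0 => hq n0 hio

theorem hasSum_measureReal_iUnion {Ω ι : Type*} [Countable ι] {m0 : MeasurableSpace Ω}
    {P : Measure Ω} [IsFiniteMeasure P] {f : ι → Set Ω}
    (hd : Pairwise (Function.onFun Disjoint f)) (hm : ∀ i, MeasurableSet (f i)) :
    HasSum (fun i => P.real (f i)) (P.real (⋃ i, f i)) := by
  have h1 : ∑' i, P (f i) = P (⋃ i, f i) := (measure_iUnion hd hm).symm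
  have h2 : ∑' i, P (f i) ≠ ∞ := by rw [h1]; exact measure_ne_top _ _
  have h3 := ENNReal.hasSum_toReal h2
  rwa [← ENNReal.tsum_toReal_eq (fun i => measure_ne_top _ _), h1] at h3

/-- The σ-algebra generated by an observable `g` of the environment together with the path
up to time `n`. -/
abbrev histSigma {d : ℕ} {T : Type*} [MeasurableSpace T] (g : EnvOmega d → T) (n : ℕ) :
    MeasurableSpace (RWSpace d) :=
  MeasurableSpace.comap (fun q : RWSpace d => (g q.1, fun k : Fin (n + 1) => q.2 k)) inferInstance

/-- The σ-algebras `histSigma g n` as a filtration. -/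
def histFilt {d : ℕ} {T : Type*} [MeasurableSpace T] (g : EnvOmega d → T) (hg : Measurable g) :
    Filtration ℕ (inferInstance : MeasurableSpace (RWSpace d)) where
  seq n := histSigma g n
  mono' := by
    intro m n hmn
    have hφ : Measurable (fun p : T × (Fin (n + 1) → Site d) =>
        (p.1, fun k : Fin (m + 1) => p.2 ⟨k, by omega⟩)) := by
      fun_prop
    rintro s ⟨t, ht, rfl⟩
    exact ⟨_, hφ ht, rfl⟩
  le' n := by
    refine Measurable.comap_le ?_
    fun_prop

/-- It suffices to check the lower bound of `levy_io` on cells `{g ∈ A, X_k = x_k for k ≤ n}`. -/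
theorem levy_walk {d : ℕ} {T : Type*} [MeasurableSpace T] {P : Measure (RWSpace d)}
    [IsProbabilityMeasure P] (g : EnvOmega d → T) (hg : Measurable g)
    (N S : ℕ → Set (RWSpace d)) {c : ℝ} (hc : 0 < c) (K : ℕ)
    (hN : ∀ n, MeasurableSet[histSigma g n] (N n))
    (hS : ∀ n, MeasurableSet[histSigma g (n + K)] (S n))
    (h : ∀ (n : ℕ) (x : ℕ → Site d) (A : Set T), MeasurableSet A →
      {q : RWSpace d | g q.1 ∈ A ∧ ∀ k ≤ n, q.2 k = x k} ⊆ N n →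
      c * P.real {q : RWSpace d | g q.1 ∈ A ∧ ∀ k ≤ n, q.2 k = x k} ≤
        P.real ({q : RWSpace d | g q.1 ∈ A ∧ ∀ k ≤ n, q.2 k = x k} ∩ S n)) :
    ∀ᵐ q ∂P, (∃ᶠ n in atTop, q ∈ N n) → ∃ᶠ n in atTop, q ∈ S n := by
  refine levy_io (histFilt g hg) N S hc K hN hS ?_
  rintro n G ⟨G', hG', rfl⟩ hGN
  set G : Set (RWSpace d) := (fun q : RWSpace d => (g q.1, fun k : Fin (n + 1) => q.2 k)) ⁻¹' G'
  have hGm : MeasurableSet G := (histFilt g hg).le n _ ⟨G', hG', rfl⟩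
  have hSm : MeasurableSet (S n) := (histFilt g hg).le (n + K) _ (hS n)
  -- the cell of a prefix `p`
  let e : (Fin (n + 1) → Site d) → ℕ → Site d := fun p k => if hk : k < n + 1 then p ⟨k, hk⟩ else 0
  let C : (Fin (n + 1) → Site d) → Set (RWSpace d) := fun p =>
    {q : RWSpace d | g q.1 ∈ {a | (a, p) ∈ G'} ∧ ∀ k ≤ n, q.2 k = e p k}
  have hpre : ∀ p (q : RWSpace d), (∀ k ≤ n, q.2 k = e p k) ↔ (fun k : Fin (n + 1) => q.2 k) = p := by
    intro p q
    constructor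
    · intro hq
      funext k
      have := hq k (by omega)
      simpa only [e, k.2, dif_pos, Fin.eta] using this
    · rintro rfl k hk
      simp only [e, Nat.lt_succ_of_le hk, dif_pos]
  have hsec : ∀ p, MeasurableSet {a | (a, p) ∈ G'} := fun p => measurable_prodMk_right hG'
  have hC : ∀ p, C p = G ∩ {q | (fun k : Fin (n + 1) => q.2 k) = p} := by
    intro p
    ext q
    simp only [C, mem_ofPred_eq, hpre, mem_inter_iff, G, mem_preimage]
    constructor
    · rintro ⟨h1, h2⟩; subst h2; exact ⟨h1, rfl⟩
    · rintro ⟨h1, h2⟩; subst h2; exact ⟨h1, rfl⟩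
  have hGU : G = ⋃ p, C p := by
    ext q; simp [hC]
  have hdisj : Pairwise (Function.onFun Disjoint C) := by
    intro p p' hpp
    refine Set.disjoint_left.2 fun q hq hq' => hpp ?_
    rw [hC] at hq hq'
    exact hq.2.symm.trans hq'.2
  have hCm : ∀ p, MeasurableSet (C p) := by
    intro p
    rw [hC]
    refine hGm.inter ?_
    have : Measurable (fun q : RWSpace d => (fun k : Fin (n + 1) => q.2 k)) := by fun_prop
    exact this (measurableSet_singleton p)
  have hs1 : HasSum (fun p => P.real (C p)) (P.real G) := by
    have := hasSum_measureReal_iUnion (P := P) hdisj hCm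
    rwa [← hGU] at this
  have hs2 : HasSum (fun p => P.real (C p ∩ S n)) (P.real (G ∩ S n)) := by
    have := hasSum_measureReal_iUnion (P := P) (f := fun p => C p ∩ S n)
      (fun p p' hpp => (hdisj hpp).mono inter_subset_left inter_subset_left)
      (fun p => (hCm p).inter hSm)
    rwa [← iUnion_inter, ← hGU] at this
  refine hasSum_le (fun p => ?_) (hs1.mul_left c) hs2
  refine h n (e p) _ (hsec p) ?_
  have : C p ⊆ G := by rw [hC]; exact inter_subset_left
  exact this.trans hGN

/-! ### The i.i.d. environment -/

theorem measurable_prob {d : ℕ} (v : Site d) : Measurable (fun γ : EnvDist d => γ.prob v) :=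
  (measurable_pi_apply v).comp (comap_measurable EnvDist.prob)

theorem measurable_envProb {d : ℕ} (x v : Site d) :
    Measurable (fun ω : EnvOmega d => (ω x).prob v) :=
  (measurable_prob v).comp (measurable_pi_apply x)

theorem EnvDist.prob_le_one {d : ℕ} (γ : EnvDist d) (v : Site d) : γ.prob v ≤ 1 := by
  by_cases hv : γ.prob v = 0
  · rw [hv]; exact zero_le_one
  · obtain ⟨i, rfl⟩ := γ.support v hv
    rw [← γ.total]
    exact Finset.single_le_sum (f := fun i => γ.prob (stepVec d i)) (fun j _ => γ.nonneg _)
      (Finset.mem_univ i)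

theorem IsIIDEnv.eq_infinitePi {d : ℕ} {μ : Measure (EnvDist d)} {ν : Measure (EnvOmega d)}
    [IsProbabilityMeasure μ] (h : IsIIDEnv μ ν) : ν = Measure.infinitePi (fun _ => μ) := by
  refine Measure.eq_infinitePi _ fun s t ht => ?_
  rw [← h.2.2 s t fun x _ => ht x]
  rfl

/-- The environment seen from `a`. -/
def shiftEnv {d : ℕ} (a : Site d) (ω : EnvOmega d) : EnvOmega d := fun x => ω (x + a)

theorem measurePreserving_shiftEnv {d : ℕ} {μ : Measure (EnvDist d)} {ν : Measure (EnvOmega d)}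
    (h : IsIIDEnv μ ν) (a : Site d) : MeasurePreserving (shiftEnv a) ν ν := by
  have := h.1
  have hm : Measurable (shiftEnv a : EnvOmega d → EnvOmega d) :=
    measurable_pi_lambda _ fun x => measurable_pi_apply _
  refine ⟨hm, ?_⟩
  conv_rhs => rw [h.eq_infinitePi]
  refine Measure.eq_infinitePi _ fun s t ht => ?_
  rw [Measure.map_apply hm (MeasurableSet.pi s.countable_toSet fun x _ => ht x)]
  have h1 := h.2.2 (s.map (addRightEmbedding a)) (fun x => t (x - a)) fun x _ => ht _
  simp only [Finset.prod_map, addRightEmbedding_apply, add_sub_cancel_right] at h1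
  rw [← h1]
  congr 1
  ext ω
  simp [shiftEnv, Set.mem_pi]

/-- The law of a single site. -/
theorem IsIIDEnv.map_eval {d : ℕ} {μ : Measure (EnvDist d)} {ν : Measure (EnvOmega d)}
    (h : IsIIDEnv μ ν) (x : Site d) : ν.map (fun ω => ω x) = μ := by
  ext A hA
  rw [Measure.map_apply (measurable_pi_apply x) hA]
  have := h.2.2 {x} (fun _ => A) fun _ _ => hA
  rw [Finset.prod_singleton] at this
  rw [← this]
  congr 1
  ext ω
  simp

/-- The step taken from a site not in `s` is independent of the environment on `s`. -/
theorem integral_mul_fresh {d : ℕ} {μ : Measure (EnvDist d)} {ν : Measure (EnvOmega d)}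
    (h : IsIIDEnv μ ν) (n : ℕ) (x : ℕ → Site d) (y v : Site d) (hy : ∀ k < n, x k ≠ y) :
    ∫ ω, pathWeight ω n x * (ω y).prob v ∂ν =
      (∫ ω, pathWeight ω n x ∂ν) * ∫ γ, γ.prob v ∂μ := by
  have := h.1
  have := h.2.1
  have hind : ProbabilityTheory.iIndepFun (fun x (ω : EnvOmega d) => ω x) ν := by
    rw [h.eq_infinitePi]
    exact ProbabilityTheory.iIndepFun_infinitePi (X := fun _ => id) fun _ => measurable_id
  set s : Finset (Site d) := (Finset.range n).image x with hs
  have hmem : ∀ k : Fin n, x k ∈ s := fun k =>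
    Finset.mem_image.2 ⟨k, Finset.mem_range.2 k.2, rfl⟩
  have hdisj : Disjoint s {y} := by
    rw [Finset.disjoint_singleton_right, hs, Finset.mem_image]
    rintro ⟨k, hk, hk'⟩
    exact hy k (Finset.mem_range.1 hk) hk'
  have h1 := hind.indepFun_finset s {y} hdisj fun i => measurable_pi_apply i
  have hφ : Measurable (fun p : s → EnvDist d =>
      ∏ k : Fin n, (p ⟨x k, hmem k⟩).prob (x (k + 1) - x k)) :=
    Finset.measurable_prod _ fun k _ => (measurable_prob _).comp (measurable_pi_apply _)
  have hψ : Measurable (fun p : ({y} : Finset (Site d)) → EnvDist d =>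
      (p ⟨y, Finset.mem_singleton_self y⟩).prob v) :=
    (measurable_prob _).comp (measurable_pi_apply _)
  have h2 := h1.comp hφ hψ
  have e1 : (fun ω : EnvOmega d => pathWeight ω n x) =
      (fun p : s → EnvDist d => ∏ k : Fin n, (p ⟨x k, hmem k⟩).prob (x (k + 1) - x k)) ∘
        (fun ω (i : s) => ω i) := by
    funext ω
    simp only [pathWeight, Function.comp]
    exact (Fin.prod_univ_eq_prod_range (fun k => (ω (x k)).prob (x (k + 1) - x k)) n).symm
  have e2 : (fun ω : EnvOmega d => (ω y).prob v) =
      (fun p : ({y} : Finset (Site d)) → EnvDist d =>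
        (p ⟨y, Finset.mem_singleton_self y⟩).prob v) ∘
        (fun ω (i : ({y} : Finset (Site d))) => ω i) := rfl
  rw [← e1, ← e2] at h2
  have h3 := h2.integral_fun_mul_eq_mul_integral ?_ ?_
  · rw [h3]
    congr 1
    conv_rhs => rw [← h.map_eval y]
    rw [integral_map (measurable_pi_apply y).aemeasurable
      (measurable_prob v).aestronglyMeasurable]
  · exact (Finset.measurable_prod _ fun k _ => measurable_envProb _ _).aestronglyMeasurable
  · exact (measurable_envProb _ _).aestronglyMeasurable

/-! ### Clusters and mass transport -/

theorem reaches_shiftEnv {d : ℕ} (a : Site d) (ω : EnvOmega d) (x y : Site d) :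
    Reaches (shiftEnv a ω) x y ↔ Reaches ω (x + a) (y + a) := by
  constructor
  · intro h
    refine Relation.ReflTransGen.lift (fun z => z + a) (fun b c hbc => ?_) _ _ h
    simpa [shiftEnv, Function.onFun] using hbc
  · intro h
    have := Relation.ReflTransGen.lift (p := fun b c => 0 < (shiftEnv a ω b).prob (c - b))
      (fun z => z - a) (fun b c hbc => ?_) _ _ h
    · simpa [Reaches, Function.onFun] using this
    · simpa [shiftEnv, Function.onFun] using hbc

theorem measurableSet_reaches {d : ℕ} (x y : Site d) :
    MeasurableSet {ω : EnvOmega d | Reaches ω x y} := by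
  -- paths of length `n` from `x`
  let R : EnvOmega d → ℕ → Site d → Prop := fun ω n =>
    Nat.rec (fun z => z = x) (fun _ ih z => ∃ w, ih w ∧ 0 < (ω w).prob (z - w)) n
  have hR : ∀ n z, MeasurableSet {ω | R ω n z} := by
    intro n
    induction n with
    | zero => intro z; exact MeasurableSet.const _
    | succ n ih =>
      intro z
      have : {ω | R ω (n + 1) z} = ⋃ w, {ω | R ω n w} ∩ {ω | 0 < (ω w).prob (z - w)} := by
        ext ω
        simp [R]
      rw [this]
      exact MeasurableSet.iUnion fun w => (ih w).inter (measurable_envProb _ _ measurableSet_Ioi)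
  have : {ω : EnvOmega d | Reaches ω x y} = ⋃ n, {ω | R ω n y} := by
    ext ω
    simp only [mem_ofPred_eq, mem_iUnion]
    constructor
    · intro h
      induction h with
      | refl => exact ⟨0, rfl⟩
      | tail _ hbc ih =>
        obtain ⟨n, hn⟩ := ih
        exact ⟨n + 1, _, hn, hbc⟩
    · rintro ⟨n, hn⟩
      induction n generalizing y with
      | zero => rw [show y = x from hn]; exact Relation.ReflTransGen.refl
      | succ n ih =>
        obtain ⟨w, hw1, hw2⟩ := hn
        exact (ih w hw1).tail hw2
  rw [this]
  exact MeasurableSet.iUnion fun n => hR n y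

theorem ae_clusterC_infinite {d : ℕ} {μ : Measure (EnvDist d)} {ν : Measure (EnvOmega d)}
    (h : IsIIDEnv μ ν) (hθ : ν {ω : EnvOmega d | (clusterC ω 0).Infinite} = 1) :
    ∀ᵐ ω ∂ν, ∀ x, (clusterC ω x).Infinite := by
  have := h.2.1
  have hm : MeasurableSet {ω : EnvOmega d | (clusterC ω 0).Infinite} := by
    have : {ω : EnvOmega d | (clusterC ω 0).Infinite} =
        ⋂ F : Finset (Site d), ⋃ y, ⋃ (_ : y ∉ F), {ω | Reaches ω 0 y} := by
      ext ω
      simp only [mem_ofPred_eq, mem_iInter, mem_iUnion, exists_prop]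
      constructor
      · intro hinf F
        obtain ⟨y, hy1, hy2⟩ := hinf.exists_notMem_finset F
        exact ⟨y, hy2, hy1⟩
      · intro hF hfin
        obtain ⟨y, hy1, hy2⟩ := hF hfin.toFinset
        exact hy1 (hfin.mem_toFinset.2 hy2)
    rw [this]
    exact MeasurableSet.iInter fun F => MeasurableSet.iUnion fun y =>
      MeasurableSet.iUnion fun _ => measurableSet_reaches 0 y
  have h0 : ∀ᵐ ω ∂ν, (clusterC ω 0).Infinite := (mem_ae_iff_prob_eq_one hm).2 hθ
  rw [ae_all_iff]
  intro x
  filter_upwards [(measurePreserving_shiftEnv h x).quasiMeasurePreserving.ae h0] with ω hω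
  refine Set.Infinite.mono ?_ (hω.image (add_left_injective x).injOn)
  rintro _ ⟨y, hy, rfl⟩
  have := (reaches_shiftEnv x ω 0 y).1 hy
  rwa [zero_add] at this

/-- The height `y · l` of a site, with ties broken lexicographically: an injective additive map
into a linearly ordered group. -/
def siteKey {d : ℕ} (l : Fin d → ℝ) (y : Site d) : ℝ ×ₗ Lex (Fin d → ℤ) :=
  toLex (dotR y l, toLex y)

theorem dotR_add {d : ℕ} (x y : Site d) (l : Fin d → ℝ) :
    dotR (x + y) l = dotR x l + dotR y l := by
  simp [dotR, add_mul, Finset.sum_add_distrib]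

theorem siteKey_add_le {d : ℕ} (l : Fin d → ℝ) (x y a : Site d) :
    siteKey l (x + a) ≤ siteKey l (y + a) ↔ siteKey l x ≤ siteKey l y := by
  have h : ∀ z, siteKey l (z + a) = siteKey l z + siteKey l a := by
    intro z
    simp only [siteKey, dotR_add]
    rfl
  rw [h, h, add_le_add_iff_right]

/-- `y` is the lowest site of its mutually connected cluster. -/
def IsLowest {d : ℕ} (l : Fin d → ℝ) (ω : EnvOmega d) (y : Site d) : Prop :=
  ∀ z ∈ clusterM ω y, siteKey l y ≤ siteKey l z

theorem isLowest_shiftEnv {d : ℕ} (l : Fin d → ℝ) (a : Site d) (ω : EnvOmega d) (y : Site d) :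
    IsLowest l (shiftEnv a ω) y ↔ IsLowest l ω (y + a) := by
  constructor
  · intro h z hz
    have := h (z - a) (by
      simpa only [clusterM, mem_ofPred_eq, reaches_shiftEnv, sub_add_cancel] using hz)
    rw [← siteKey_add_le l _ _ a, sub_add_cancel] at this
    exact this
  · intro h z hz
    rw [← siteKey_add_le l _ _ a]
    exact h (z + a) (by simpa only [clusterM, mem_ofPred_eq, reaches_shiftEnv] using hz)

/-- Mass transport: let every site send unit mass to the lowest site of its mutually connected
cluster. The expected mass sent is at most `1`, hence so is the expected mass received, and a
lowest site almost surely has a finite cluster. -/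
theorem ae_finite_of_isLowest {d : ℕ} {μ : Measure (EnvDist d)} {ν : Measure (EnvOmega d)}
    (h : IsIIDEnv μ ν) (l : Fin d → ℝ) :
    ∀ᵐ ω ∂ν, ∀ y, IsLowest l ω y → (clusterM ω y).Finite := by
  have := h.2.1
  have hMm : ∀ x y : Site d, MeasurableSet {ω : EnvOmega d | x ∈ clusterM ω y} := fun x y =>
    (measurableSet_reaches y x).inter (measurableSet_reaches x y)
  let B : Site d → Site d → Set (EnvOmega d) := fun y x => {ω | IsLowest l ω y ∧ x ∈ clusterM ω y}
  have hBm : ∀ y x, MeasurableSet (B y x) := by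
    intro y x
    have : B y x = (⋂ z, ({ω | z ∈ clusterM ω y}ᶜ ∪ {_ω | siteKey l y ≤ siteKey l z})) ∩
        {ω | x ∈ clusterM ω y} := by
      ext ω
      simp only [B, IsLowest, mem_ofPred_eq, mem_inter_iff, mem_iInter, mem_union, mem_compl_iff,
        imp_iff_not_or]
    rw [this]
    exact (MeasurableSet.iInter fun z => (hMm z y).compl.union (MeasurableSet.const _)).inter
      (hMm x y)
  rw [ae_all_iff]
  intro y
  have hsum : ∑' x, ν (B y x) ≠ ∞ := by
    have e1 : ∀ x, ν (B y x) = ν (B (y + y - x) y) := by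
      intro x
      rw [← (measurePreserving_shiftEnv h (x - y)).measure_preimage
        (hBm (y + y - x) y).nullMeasurableSet]
      congr 1
      ext ω
      have e2 : y + y - x + (x - y) = y := by abel
      have e3 : y + (x - y) = x := by abel
      simp only [B, mem_preimage, mem_ofPred_eq, isLowest_shiftEnv, clusterM, reaches_shiftEnv,
        e2, e3]
    simp_rw [e1]
    have hd : Pairwise (Function.onFun Disjoint fun x => B (y + y - x) y) := by
      intro x x' hxx
      refine Set.disjoint_left.2 fun ω hω hω' => hxx ?_
      obtain ⟨hl, h1, h2⟩ := hω
      obtain ⟨hl', h1', h2'⟩ := hω'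
      have a1 := hl _ ⟨h1.trans h2', h1'.trans h2⟩
      have a2 := hl' _ ⟨h1'.trans h2, h1.trans h2'⟩
      have a3 := congrArg (fun p => ofLex (ofLex p).2) (le_antisymm a1 a2)
      have a4 : y + y - x = y + y - x' := a3
      exact sub_right_injective a4
    rw [← measure_iUnion hd fun x => hBm _ _]
    exact measure_ne_top _ _
  filter_upwards [ae_finite_setOfPred_mem hsum] with ω hω hlow
  refine hω.subset fun x hx => ⟨hlow, hx⟩

/-! ### The annealed walk -/

theorem pathWeight_succ {d : ℕ} (ω : EnvOmega d) (n : ℕ) (x : ℕ → Site d) :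
    pathWeight ω (n + 1) x = pathWeight ω n x * (ω (x n)).prob (x (n + 1) - x n) :=
  Finset.prod_range_succ _ _

theorem pathWeight_congr {d : ℕ} (ω : EnvOmega d) (n : ℕ) (x x' : ℕ → Site d)
    (h : ∀ k ≤ n, x k = x' k) : pathWeight ω n x = pathWeight ω n x' := by
  refine Finset.prod_congr rfl fun k hk => ?_
  have := Finset.mem_range.1 hk
  rw [h k (by omega), h (k + 1) (by omega)]

theorem pathWeight_nonneg {d : ℕ} (ω : EnvOmega d) (n : ℕ) (x : ℕ → Site d) :
    0 ≤ pathWeight ω n x := Finset.prod_nonneg fun _ _ => (ω _).nonneg _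

theorem pathWeight_le_one {d : ℕ} (ω : EnvOmega d) (n : ℕ) (x : ℕ → Site d) :
    pathWeight ω n x ≤ 1 :=
  Finset.prod_le_one (fun _ _ => (ω _).nonneg _) fun _ _ => (ω _).prob_le_one _

theorem measurable_pathWeight {d : ℕ} (n : ℕ) (x : ℕ → Site d) :
    Measurable (fun ω : EnvOmega d => pathWeight ω n x) :=
  Finset.measurable_prod _ fun _ _ => measurable_envProb _ _

theorem integrable_pathWeight {d : ℕ} (ν : Measure (EnvOmega d)) [IsFiniteMeasure ν] (n : ℕ)
    (x : ℕ → Site d) : Integrable (fun ω => pathWeight ω n x) ν := by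
  refine Integrable.of_bound (measurable_pathWeight n x).aestronglyMeasurable 1
    (ae_of_all _ fun ω => ?_)
  rw [Real.norm_eq_abs, abs_of_nonneg (pathWeight_nonneg _ _ _)]
  exact pathWeight_le_one _ _ _

theorem IsRWRE.real_cell {d : ℕ} {μ : Measure (EnvDist d)} {P : Measure (RWSpace d)}
    (hP : IsRWRE μ P) (n : ℕ) (x : ℕ → Site d) {A : Set (EnvOmega d)} (hA : MeasurableSet A) :
    P.real {q | q.1 ∈ A ∧ ∀ k ≤ n, q.2 k = x k} =
      (if x 0 = 0 then (1 : ℝ) else 0) * ∫ ω in A, pathWeight ω n x ∂(P.map Prod.fst) :=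
  hP.2.2 n x A hA

/-- Almost surely every step has positive transition probability. -/
theorem IsRWRE.ae_step_pos {d : ℕ} {μ : Measure (EnvDist d)} {P : Measure (RWSpace d)}
    (hP : IsRWRE μ P) :
    ∀ᵐ q ∂P, ∀ n, 0 < (q.1 (q.2 n)).prob (q.2 (n + 1) - q.2 n) := by
  have := hP.1
  rw [ae_all_iff]
  intro n
  let e : (Fin (n + 2) → Site d) → ℕ → Site d := fun p k => if hk : k < n + 2 then p ⟨k, hk⟩ else 0
  let A : (Fin (n + 2) → Site d) → Set (EnvOmega d) := fun p =>
    {ω | (ω (e p n)).prob (e p (n + 1) - e p n) ≤ 0}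
  have hnull : P (⋃ p, {q | q.1 ∈ A p ∧ ∀ k ≤ n + 1, q.2 k = e p k}) = 0 := by
    refine measure_iUnion_null fun p => ?_
    have hAm : MeasurableSet (A p) := measurable_envProb _ _ measurableSet_Iic
    rw [← measureReal_eq_zero_iff, hP.real_cell _ _ hAm, setIntegral_eq_zero_of_forall_eq_zero,
      mul_zero]
    intro ω hω
    rw [pathWeight_succ, le_antisymm hω ((ω _).nonneg _), mul_zero]
  filter_upwards [measure_eq_zero_iff_ae_notMem.1 hnull] with q hq
  by_contra hlt
  refine hq (mem_iUnion.2 ⟨fun k => q.2 k, ?_, fun k hk => ?_⟩)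
  · simpa [A, e] using hlt
  · simp only [e, Nat.lt_succ_of_le hk, dif_pos]

/-- Almost surely, if `x` is visited infinitely often then so is each of its out-neighbours. -/
theorem IsRWRE.ae_frequently_step {d : ℕ} {μ : Measure (EnvDist d)} {P : Measure (RWSpace d)}
    (hP : IsRWRE μ P) :
    ∀ᵐ q ∂P, ∀ x y : Site d, 0 < (q.1 x).prob (y - x) → (∃ᶠ n in atTop, q.2 n = x) →
      ∃ᶠ n in atTop, q.2 n = y := by
  have := hP.1
  have := hP.2.1.2.1
  have key : ∀ (x y : Site d) (j : ℕ), ∀ᵐ q ∂P,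
      (∃ᶠ n in atTop, q ∈ {q : RWSpace d | q.2 n = x ∧ (1 : ℝ) / (j + 1) ≤ (q.1 x).prob (y - x)}) →
        ∃ᶠ n in atTop, q ∈ {q : RWSpace d | q.2 (n + 1) = y} := by
    intro x y j
    refine levy_walk (fun ω => ω) measurable_id _ _ (c := (1 : ℝ) / (j + 1)) (by positivity) 1
      (fun n => ?_) (fun n => ?_) ?_
    · refine ⟨{p | p.2 (Fin.last n) = x ∧ (1 : ℝ) / (j + 1) ≤ (p.1 x).prob (y - x)}, ?_, rfl⟩
      refine MeasurableSet.inter ?_ ?_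
      · have hm : Measurable fun p : EnvOmega d × (Fin (n + 1) → Site d) => p.2 (Fin.last n) := by
          fun_prop
        exact hm (measurableSet_singleton x)
      · exact ((measurable_envProb x (y - x)).comp measurable_fst) measurableSet_Ici
    · refine ⟨{p | p.2 (Fin.last (n + 1)) = y}, ?_, rfl⟩
      have hm : Measurable fun p : EnvOmega d × (Fin (n + 1 + 1) → Site d) =>
          p.2 (Fin.last (n + 1)) := by
        fun_prop
      exact hm (measurableSet_singleton y)
    · intro n z A hA hsub
      have hcell : ∀ ω ∈ A, z n = x ∧ (1 : ℝ) / (j + 1) ≤ (ω x).prob (y - x) := fun ω hω =>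
        hsub (show (ω, z) ∈ _ from ⟨hω, fun _ _ => rfl⟩)
      let z' : ℕ → Site d := Function.update z (n + 1) y
      have hz' : ∀ k ≤ n, z' k = z k := fun k hk => Function.update_of_ne (by omega) _ _
      have e1 : {q : RWSpace d | q.1 ∈ A ∧ ∀ k ≤ n, q.2 k = z k} ∩ {q | q.2 (n + 1) = y} =
          {q : RWSpace d | q.1 ∈ A ∧ ∀ k ≤ n + 1, q.2 k = z' k} := by
        ext q
        simp only [mem_inter_iff, mem_ofPred_eq, and_assoc]
        refine and_congr_right fun _ => ⟨fun ⟨h1, h2⟩ k hk => ?_, fun h1 => ⟨fun k hk => ?_, ?_⟩⟩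
        · rcases Nat.lt_or_ge n k with h | h
          · obtain rfl : k = n + 1 := by omega
            rw [h2]; simp [z']
          · rw [h1 k h, hz' k h]
        · rw [h1 k (by omega), hz' k hk]
        · rw [h1 (n + 1) le_rfl]; simp [z']
      rw [e1, hP.real_cell _ _ hA, hP.real_cell _ _ hA, hz' 0 (Nat.zero_le _), mul_left_comm]
      refine mul_le_mul_of_nonneg_left ?_ (by split_ifs <;> norm_num)
      rw [← integral_const_mul]
      refine setIntegral_mono_on ((integrable_pathWeight _ _ _).const_mul _).integrableOn
        (integrable_pathWeight _ _ _).integrableOn hA fun ω hω => ?_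
      obtain ⟨h1, h2⟩ := hcell ω hω
      rw [pathWeight_succ, pathWeight_congr ω n z' z hz', hz' n le_rfl, h1, mul_comm]
      refine mul_le_mul_of_nonneg_left ?_ (pathWeight_nonneg _ _ _)
      simpa [z'] using h2
  filter_upwards [ae_all_iff.2 fun x => ae_all_iff.2 fun y => ae_all_iff.2 (key x y)] with
    q hq x y hpos hio
  obtain ⟨j, hj⟩ := exists_nat_one_div_lt hpos
  have h1 : ∃ᶠ n in atTop, q.2 (n + 1) = y := hq x y j (hio.mono fun n hn => ⟨hn, hj.le⟩)
  exact (tendsto_add_atTop_nat 1).frequently h1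

/-- From a time at which the ray `X_n, X_n + v, X_n + 2v, …` is unexplored, the walk follows the
ray for `K` steps with conditional probability `(∫ γ(v) dμ)^K`, so this happens infinitely often
as soon as there are infinitely many such times. -/
theorem IsRWRE.ae_frequently_run {d : ℕ} {μ : Measure (EnvDist d)} {P : Measure (RWSpace d)}
    (hP : IsRWRE μ P) {v : Site d} (hv0 : v ≠ 0)
    (hv : 0 < ∫ γ, γ.prob v ∂μ) (l : Fin d → ℝ) (M : ℝ) (K : ℕ) :
    ∀ᵐ q ∂P, (∃ᶠ n in atTop, dotR (q.2 n) l ≤ M ∧ ∀ k < n, ∀ i : ℕ, q.2 k ≠ q.2 n + i • v) →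
      ∃ᶠ n in atTop, dotR (q.2 n) l ≤ M ∧ q.2 (n + K) = q.2 n + K • v := by
  have := hP.1
  have hcell : ∀ n x, P.real {q | ∀ k ≤ n, q.2 k = x k} =
      (if x 0 = 0 then (1 : ℝ) else 0) * ∫ ω, pathWeight ω n x ∂(P.map Prod.fst) := by
    intro n x
    have := hP.real_cell n x MeasurableSet.univ
    simpa using this
  refine levy_walk (T := Unit) (fun _ => ()) measurable_const
    (fun n => {q | dotR (q.2 n) l ≤ M ∧ ∀ k < n, ∀ i : ℕ, q.2 k ≠ q.2 n + i • v})
    (fun n => {q | dotR (q.2 n) l ≤ M ∧ q.2 (n + K) = q.2 n + K • v})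
    (pow_pos hv K) K (fun n => ?_) (fun n => ?_) ?_
  · refine ⟨{p | dotR (p.2 (Fin.last n)) l ≤ M ∧
      ∀ k : Fin (n + 1), k.1 < n → ∀ i : ℕ, p.2 k ≠ p.2 (Fin.last n) + i • v},
      (Set.to_countable _).measurableSet, ?_⟩
    ext q
    simp only [mem_preimage, mem_ofPred_eq]
    refine and_congr_right fun _ => ⟨fun h k hk => ?_, fun h k hk => h k hk⟩
    exact h ⟨k, by omega⟩ hk
  · refine ⟨{p | dotR (p.2 ⟨n, by omega⟩) l ≤ M ∧ p.2 (Fin.last (n + K)) =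
      p.2 ⟨n, by omega⟩ + K • v}, (Set.to_countable _).measurableSet, rfl⟩
  · intro n x A hA hsub
    rcases A.eq_empty_or_nonempty with rfl | ⟨⟨⟩, hA0⟩
    · simp
    have hA1 : ∀ u : Unit, u ∈ A := fun _ => hA0
    simp only [hA1, true_and] at hsub ⊢
    have hω : Nonempty (EnvOmega d) := by
      by_contra hne
      have : IsEmpty (EnvOmega d) := not_nonempty_iff.1 hne
      have : P = 0 := Measure.eq_zero_of_isEmpty P
      have h1 : P univ = 1 := measure_univ
      simp [this] at h1
    obtain ⟨hM, hfresh⟩ : dotR (x n) l ≤ M ∧ ∀ k < n, ∀ i : ℕ, x k ≠ x n + i • v :=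
      hsub (show (hω.some, x) ∈ _ from fun _ _ => rfl)
    -- the prefix `x` continued along the ray
    let z : ℕ → Site d := fun k => if k ≤ n then x k else x n + (k - n) • v
    have hz : ∀ k ≤ n, z k = x k := fun k hk => if_pos hk
    have hz' : ∀ j, z (n + j) = x n + j • v := by
      intro j
      rcases Nat.eq_zero_or_pos j with rfl | hj
      · simp [z]
      · simp [z, hj.ne']
    have hind : ∀ j, P.real {q | ∀ k ≤ n + j, q.2 k = z k} =
        (∫ γ, γ.prob v ∂μ) ^ j * P.real {q | ∀ k ≤ n, q.2 k = z k} := by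
      intro j
      induction j with
      | zero => simp
      | succ j ih =>
        rw [pow_succ, mul_right_comm, ← ih, hcell, hcell, mul_assoc]
        congr 1
        rw [← integral_mul_fresh hP.2.1 (n + j) z (z (n + j)) v]
        · refine integral_congr_ae (ae_of_all _ fun ω => ?_)
          simp only [← add_assoc, pathWeight_succ]
          have : z (n + j + 1) - z (n + j) = v := by
            rw [add_assoc, hz', hz', succ_nsmul]; abel
          rw [this]
        · intro k hk heq
          rw [hz'] at heq
          rcases Nat.lt_or_ge k n with h | h
          · rw [hz k h.le] at heq
            exact hfresh k h j heq
          · obtain ⟨i, rfl⟩ := Nat.exists_eq_add_of_le h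
            rw [hz', add_right_inj] at heq
            have : i ≠ j := by omega
            have hinj : (fun m : ℕ => m • v).Injective := by
              intro a b hab
              obtain ⟨t, ht⟩ := Function.ne_iff.1 hv0
              have := congrFun hab t
              simp only [Pi.smul_apply, nsmul_eq_mul] at this
              exact_mod_cast mul_right_cancel₀ ht this
            exact this (hinj heq)
    have e1 : {q : RWSpace d | ∀ k ≤ n, q.2 k = x k} = {q | ∀ k ≤ n, q.2 k = z k} := by
      ext q
      exact forall₂_congr fun k hk => by rw [hz k hk]
    rw [e1, ← hind K]
    refine measureReal_mono fun q hq => ⟨fun k hk => hq k (by omega), ?_, ?_⟩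
    · rw [hq n (by omega), hz n le_rfl]; exact hM
    · rw [hq (n + K) le_rfl, hq n (by omega), hz', hz n le_rfl]

/-! ### Recurrence to a strip -/

theorem dotR_neg {d : ℕ} (x : Site d) (l : Fin d → ℝ) : dotR x (-l) = -dotR x l := by
  simp [dotR]

theorem dotR_zsmul {d : ℕ} (j : ℤ) (x : Site d) (l : Fin d → ℝ) :
    dotR (j • x) l = j * dotR x l := by
  simp [dotR, Finset.mul_sum, mul_assoc]

theorem dotR_nsmul {d : ℕ} (j : ℕ) (x : Site d) (l : Fin d → ℝ) :
    dotR (j • x) l = j * dotR x l := by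
  simp [dotR, Finset.mul_sum, mul_assoc]

theorem dotR_stepVec_true {d : ℕ} (i : Fin d) (l : Fin d → ℝ) :
    dotR (stepVec d (i, true)) l = l i := by
  simp [dotR, stepVec, Pi.single_apply]

/-- A path visiting infinitely many sites of a strip enters infinitely many of the half-lines
`{x + j v : j ∈ ℤ} ∩ {dotR · l ≤ M}`, and at the first entrance to such a half-line the ray
ahead is unexplored. -/
theorem frequently_fresh {d : ℕ} (w : ℕ → Site d) {v : Site d} {l : Fin d → ℝ}
    (hv : dotR v l < 0) {m M : ℝ}
    (hV : {x | (∃ n, w n = x) ∧ m ≤ dotR x l ∧ dotR x l ≤ M}.Infinite) :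
    ∃ᶠ n in atTop, dotR (w n) l ≤ M ∧ ∀ k < n, ∀ i : ℕ, w k ≠ w n + i • v := by
  intro hev
  obtain ⟨n0, hn0⟩ := eventually_atTop.1 hev
  have hJ : ∀ a : ℝ, {j : ℤ | m ≤ a + j * dotR v l ∧ a + j * dotR v l ≤ M}.Finite := by
    intro a
    refine (Set.finite_Icc ⌈(a - M) / (-dotR v l)⌉ ⌊(a - m) / (-dotR v l)⌋).subset ?_
    rintro j ⟨h1, h2⟩
    have hpos : 0 < -dotR v l := by linarith
    constructor
    · rw [Int.ceil_le, div_le_iff₀ hpos]; linarith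
    · rw [Int.le_floor, le_div_iff₀ hpos]; linarith
  refine hV ((Set.Finite.biUnion (Set.finite_Iio n0) fun n _ =>
    (hJ (dotR (w n) l)).image fun j : ℤ => w n + j • v).subset ?_)
  rintro x ⟨⟨N, hN⟩, h1, h2⟩
  have hex : ∃ n, dotR (w n) l ≤ M ∧ ∃ j : ℤ, w n = x + j • v :=
    ⟨N, by rw [hN]; exact h2, 0, by simp [hN]⟩
  obtain ⟨hM, j, hj⟩ := Nat.find_spec hex
  have hlt : Nat.find hex < n0 := by
    by_contra hge
    refine hn0 _ (not_lt.1 hge) ⟨hM, fun k hk i heq => Nat.find_min hex hk ⟨?_, j + i, ?_⟩⟩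
    · rw [heq, dotR_add, dotR_nsmul]
      have : (i : ℝ) * dotR v l ≤ 0 := mul_nonpos_of_nonneg_of_nonpos (Nat.cast_nonneg i) hv.le
      linarith
    · rw [heq, hj, add_zsmul, natCast_zsmul, add_assoc]
  have hx : x = w (Nat.find hex) + (-j) • v := by
    rw [hj, neg_zsmul]; abel
  refine mem_biUnion (x := Nat.find hex) hlt ⟨-j, ?_, hx.symm⟩
  have : dotR (w (Nat.find hex)) l + ((-j : ℤ) : ℝ) * dotR v l = dotR x l := by
    rw [← dotR_zsmul, ← dotR_add, ← hx]
  simp only [mem_ofPred_eq, this]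
  exact ⟨h1, h2⟩

/-- If `v` is an admissible downward step and the walk visits infinitely many sites of a strip,
then its height has no lower bound along any tail of the path. -/
theorem IsRWRE.ae_frequently_le {d : ℕ} {μ : Measure (EnvDist d)} {P : Measure (RWSpace d)}
    (hP : IsRWRE μ P) {v : Site d} {l : Fin d → ℝ} (hvl : dotR v l < 0)
    (hv : 0 < ∫ γ, γ.prob v ∂μ) :
    ∀ᵐ q ∂P, ∀ (M : ℤ) (m : ℝ),
      {x | (∃ n, q.2 n = x) ∧ m ≤ dotR x l ∧ dotR x l ≤ M}.Infinite →
      ∀ b : ℝ, ∃ᶠ n in atTop, dotR (q.2 n) l ≤ b := by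
  have hv0 : v ≠ 0 := by
    rintro rfl
    simp [dotR] at hvl
  filter_upwards [ae_all_iff.2 fun M : ℤ => ae_all_iff.2 fun K : ℕ =>
    hP.ae_frequently_run hv0 hv l M K] with q hq M m hV b
  obtain ⟨K, hK⟩ := exists_nat_gt ((M - b) / (-dotR v l))
  rw [div_lt_iff₀ (by linarith)] at hK
  refine (tendsto_add_atTop_nat K).frequently ((hq M K (frequently_fresh q.2 hvl hV)).mono ?_)
  rintro n ⟨h1, h2⟩
  rw [h2, dotR_add, dotR_nsmul]
  linarith

/-- Only admissible steps have positive probability somewhere in the environment. -/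
theorem IsIIDEnv.ae_admissible {d : ℕ} {μ : Measure (EnvDist d)} {ν : Measure (EnvOmega d)}
    (h : IsIIDEnv μ ν) :
    ∀ᵐ ω ∂ν, ∀ x v : Site d, 0 < (ω x).prob v → 0 < ∫ γ, γ.prob v ∂μ := by
  have := h.1
  rw [ae_all_iff]; intro x
  rw [ae_all_iff]; intro v
  by_cases hv : 0 < ∫ γ, γ.prob v ∂μ
  · exact ae_of_all _ fun _ _ => hv
  have hi : Integrable (fun γ : EnvDist d => γ.prob v) μ := by
    refine Integrable.of_bound (measurable_prob v).aestronglyMeasurable 1 (ae_of_all _ fun γ => ?_)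
    rw [Real.norm_eq_abs, abs_of_nonneg (γ.nonneg v)]
    exact γ.prob_le_one v
  have h0 : ∫ γ, γ.prob v ∂μ = 0 :=
    le_antisymm (not_lt.1 hv) (integral_nonneg fun γ => γ.nonneg v)
  have h1 := (integral_eq_zero_iff_of_nonneg (fun γ => γ.nonneg v) hi).1 h0
  rw [← h.map_eval x] at h1
  filter_upwards [ae_of_ae_map (measurable_pi_apply x).aemeasurable h1] with ω hω hpos
  exact absurd hω hpos.ne'

/-- If some admissible step `e` changes the height, then almost surely the liminf of the height is
`-∞` unless the height tends to `+∞`. -/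
theorem IsRWRE.ae_frequently_low {d : ℕ} {μ : Measure (EnvDist d)} {P : Measure (RWSpace d)}
    (hP : IsRWRE μ P)
    (hθ : (P.map Prod.fst) {ω : EnvOmega d | (clusterC ω 0).Infinite} = 1)
    {l : Fin d → ℝ} {e : Site d} (he : 0 < ∫ γ, γ.prob e ∂μ) (hel : dotR e l ≠ 0) :
    ∀ᵐ q ∂P, ¬ Tendsto (fun n => dotR (q.2 n) l) atTop atTop →
      ∀ b : ℝ, ∃ᶠ n in atTop, dotR (q.2 n) l ≤ b := by
  have hdown : ∀ l : Fin d → ℝ, ∀ᵐ q ∂P, ∀ v : Site d, dotR v l < 0 → 0 < ∫ γ, γ.prob v ∂μ →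
      ∀ (M : ℤ) (m : ℝ), {x | (∃ n, q.2 n = x) ∧ m ≤ dotR x l ∧ dotR x l ≤ M}.Infinite →
      ∀ b : ℝ, ∃ᶠ n in atTop, dotR (q.2 n) l ≤ b := by
    intro l
    rw [ae_all_iff]; intro v
    by_cases h : dotR v l < 0 ∧ 0 < ∫ γ, γ.prob v ∂μ
    · filter_upwards [hP.ae_frequently_le h.1 h.2] with q hq _ _ using hq
    · exact ae_of_all _ fun q h1 h2 => absurd ⟨h1, h2⟩ h
  have hf : AEMeasurable (Prod.fst : RWSpace d → EnvOmega d) P := measurable_fst.aemeasurable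
  filter_upwards [hdown l, hdown (-l), hP.ae_step_pos, hP.ae_frequently_step,
    ae_of_ae_map hf (ae_clusterC_infinite hP.2.1 hθ),
    ae_of_ae_map hf (ae_finite_of_isLowest hP.2.1 l),
    ae_of_ae_map hf hP.2.1.ae_admissible] with q hq1 hq1' hstep hio hinf hlow hadm htop
  set ω := q.1
  set w := q.2
  by_contra hcon
  push Not at hcon
  obtain ⟨b, hb⟩ := hcon
  replace hb : ∀ᶠ n in atTop, b < dotR (w n) l := by simpa using hb
  obtain ⟨M, hM⟩ : ∃ M : ℤ, ∃ᶠ n in atTop, dotR (w n) l ≤ M := by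
    rw [tendsto_atTop] at htop
    push Not at htop
    obtain ⟨B, hB⟩ := htop
    exact ⟨⌈B⌉, hB.mono fun n hn => hn.le.trans (Int.le_ceil B)⟩
  have hV : {x | (∃ n, w n = x) ∧ b ≤ dotR x l ∧ dotR x l ≤ M}.Infinite := by
    intro hfin
    obtain ⟨x, hxV, hx⟩ : ∃ x ∈ {x | (∃ n, w n = x) ∧ b ≤ dotR x l ∧ dotR x l ≤ M},
        ∃ᶠ n in atTop, w n = x := by
      by_contra hne
      push Not at hne
      have h1 := (eventually_all_finite hfin).2 hne
      obtain ⟨n, h2, h3, h4⟩ := (hM.and_eventually (h1.and hb)).exists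
      exact h3 (w n) ⟨⟨n, rfl⟩, h4.le, h2⟩ rfl
    have hall : ∀ y, Reaches ω x y → ∃ᶠ n in atTop, w n = y := by
      intro y hy
      induction hy with
      | refl => exact hx
      | tail _ hbc ih => exact hio _ _ hbc ih
    have hpath : ∀ n k, Reaches ω (w n) (w (n + k)) := by
      intro n k
      induction k with
      | zero => exact Relation.ReflTransGen.refl
      | succ k ih => exact ih.tail (hstep (n + k))
    have hback : ∀ y, Reaches ω x y → Reaches ω y x := by
      intro y hy
      obtain ⟨n, hn⟩ := (hall y hy).exists
      obtain ⟨n', hn', hn''⟩ := frequently_atTop.1 hx n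
      obtain ⟨k, rfl⟩ := Nat.exists_eq_add_of_le hn'
      rw [← hn, ← hn'']
      exact hpath n k
    -- the part of the recurrent class below `x` lies in the strip, so it has a lowest site
    have hW : {y | Reaches ω x y ∧ dotR y l ≤ dotR x l}.Finite := by
      refine hfin.subset ?_
      rintro y ⟨h1, h2⟩
      obtain ⟨n, hn, hn'⟩ := ((hall y h1).and_eventually hb).exists
      rw [hn] at hn'
      exact ⟨⟨n, hn⟩, hn'.le, h2.trans hxV.2.2⟩
    obtain ⟨y, ⟨hy1, hy2⟩, hy⟩ := Set.exists_min_image _ (siteKey l) hW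
      ⟨x, Relation.ReflTransGen.refl, le_rfl⟩
    have hyl : IsLowest l ω y := by
      rintro z ⟨hz, -⟩
      rcases le_or_gt (dotR z l) (dotR x l) with h | h
      · exact hy z ⟨hy1.trans hz, h⟩
      · exact Prod.Lex.toLex_le_toLex.2 (Or.inl (hy2.trans_lt h))
    refine hinf x ((hlow y hyl).subset fun z hz => ⟨(hback y hy1).trans hz, (hback z hz).trans hy1⟩)
  by_cases hex : ∃ v, dotR v l < 0 ∧ 0 < ∫ γ, γ.prob v ∂μ
  · obtain ⟨v, h1, h2⟩ := hex
    obtain ⟨n, h3, h4⟩ := ((hq1 v h1 h2 M b hV b).and_eventually hb).exists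
    exact absurd h3 (not_le.2 h4)
  · -- without downward steps the height is monotone, hence bounded above by `M`
    push Not at hex
    have hstep0 : ∀ v, 0 < ∫ γ, γ.prob v ∂μ → 0 ≤ dotR v l := by
      intro v hv
      by_contra hlt
      exact absurd (hex v (not_le.1 hlt)) (not_le.2 hv)
    have hmono : Monotone fun n => dotR (w n) l := by
      refine monotone_nat_of_le_succ fun n => ?_
      have h1 := hstep0 _ (hadm _ _ (hstep n))
      have h2 : dotR (w (n + 1)) l = dotR (w n) l + dotR (w (n + 1) - w n) l := by
        rw [← dotR_add]; congr 1; abel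
      linarith
    have hle : ∀ n, dotR (w n) l ≤ M := by
      intro n
      obtain ⟨k, hk, hk'⟩ := frequently_atTop.1 hM n
      exact (hmono hk).trans hk'
    have he0 : dotR e (-l) < 0 := by
      have := lt_of_le_of_ne (hstep0 e he) hel.symm
      rw [dotR_neg]; linarith
    have hV' : {x | (∃ n, w n = x) ∧ -(M : ℝ) ≤ dotR x (-l) ∧ dotR x (-l) ≤ (⌈-b⌉ : ℤ)}.Infinite := by
      refine hV.mono ?_
      rintro x ⟨h1, h2, h3⟩
      refine ⟨h1, ?_, ?_⟩
      · rw [dotR_neg]; linarith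
      · rw [dotR_neg]; exact (neg_le_neg h2).trans (Int.le_ceil _)
    obtain ⟨n, hn⟩ := (hq1' e he0 he _ _ hV' (-M - 1)).exists
    rw [dotR_neg] at hn
    linarith [hle n]

/-- assume `θ₊ = 1` and condition (★); then `P(O) = P(∩_m O_m)`, where
`O = (A₊ ∪ A₋)ᶜ` and `O_m` is the event that `X_n·ℓ ≤ m` i.o. and `X_n·ℓ ≥ m` i.o. -/
theorem stmt10 {d : ℕ} (hd : 2 ≤ d) (μ : Measure (EnvDist d))
    (P : Measure (RWSpace d)) (hP : IsRWRE μ P)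
    (hθ : (P.map Prod.fst) {ω : EnvOmega d | (clusterC ω 0).Infinite} = 1)
    (hstar : ∀ i : Fin d, 0 < μ {γ : EnvDist d | 0 < γ.prob (stepVec d (i, true))})
    (l : Fin d → ℝ) (hl : l ≠ 0) :
    P {q : RWSpace d | ¬ (Tendsto (fun n => dotR (q.2 n) l) atTop atTop ∨
        Tendsto (fun n => dotR (q.2 n) l) atTop atBot)} =
    P {q : RWSpace d | ∀ m : ℤ,
        (∃ᶠ n in atTop, dotR (q.2 n) l ≤ (m : ℝ)) ∧
        (∃ᶠ n in atTop, (m : ℝ) ≤ dotR (q.2 n) l)} := by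
  have := hP.1
  have := hP.2.1.1
  obtain ⟨i, hi⟩ := Function.ne_iff.1 hl
  have hi : l i ≠ 0 := hi
  have he : 0 < ∫ γ, γ.prob (stepVec d (i, true)) ∂μ := by
    rw [integral_pos_iff_support_of_nonneg (fun γ => γ.nonneg _)]
    · refine (hstar i).trans_le (measure_mono fun γ hγ => ?_)
      exact ne_of_gt hγ
    · refine Integrable.of_bound (measurable_prob _).aestronglyMeasurable 1
        (ae_of_all _ fun γ => ?_)
      rw [Real.norm_eq_abs, abs_of_nonneg (γ.nonneg _)]
      exact γ.prob_le_one _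
  have h1 := hP.ae_frequently_low hθ (l := l) he (by rwa [dotR_stepVec_true])
  have h2 := hP.ae_frequently_low hθ (l := -l) he (by
    rw [dotR_stepVec_true]; exact neg_ne_zero.2 hi)
  refine measure_congr ?_
  filter_upwards [h1, h2] with q hq1 hq2
  refine propext ⟨fun hO m => ?_, fun hO => ?_⟩
  · obtain ⟨ho1, ho2⟩ := not_or.1 hO
    refine ⟨hq1 ho1 m, (hq2 (fun ht => ho2 ?_) (-m)).mono fun n hn => ?_⟩
    · simp only [dotR_neg] at ht
      exact tendsto_neg_atTop_iff.1 ht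
    · rw [dotR_neg] at hn
      linarith
  · rintro (ht | ht)
    · obtain ⟨n, hn1, hn2⟩ := ((hO 0).1.and_eventually (ht.eventually_gt_atTop _)).exists
      exact absurd hn1 (not_le.2 hn2)
    · obtain ⟨n, hn1, hn2⟩ := ((hO 0).2.and_eventually (ht.eventually_lt_atBot _)).exists
      exact absurd hn1 (not_le.2 hn2)
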